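/- arXiv:2408.17232 — 2 statements merged into one kernel-verified Lean document; each statement's English description precedes it below -/
import Mathlib

section
/- For all integers n ≥ 1, k ≥ 1 and q ≥ 0 with n − k − q ≥ 0 and 2n − k − 2q − 1 ≥ 0, the total number C_{n,k,q} of bubbles of size q found amongst all crystallized diagrams on n chords that contain exactly k short chords is C_{n,k,q} = (k+1) · (2n−k−q−1)!/(2n−k−2q−1)! · Σ (w_1! · w_2! ⋯ w_k!) / (p_1! ⋯ p_{k(k−1)/2}!), where the sum ranges over all tuples (p_1,…,p_{k(k−1)/2}) of nonnegative integers with p_1 + ⋯ + p_{k(k−1)/2} = n − k − q, and w_j = Σ_{i : edge i of K_k is incident to vertex j} p_i for each vertex j of the complete graph K_k. -/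
namespace ChordBubbles

/-- A linear chord diagram with `n` chords: a fixed-point-free involution of `Fin (2*n)`. -/
def IsDiagram (n : ℕ) (f : Equiv.Perm (Fin (2 * n))) : Prop :=
  (∀ i, f (f i) = i) ∧ ∀ i, f i ≠ i

/-- Vertex `i` is an endpoint of a short chord (a chord joining adjacent vertices). -/
def ShortEnd (n : ℕ) (f : Equiv.Perm (Fin (2 * n))) (i : Fin (2 * n)) : Prop :=
  (f i).val = i.val + 1 ∨ (f i).val + 1 = i.val

/-- `[a, b]` delimits a bubble: a maximal nonempty interval of vertices none of which is an
endpoint of a short chord. -/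
def IsBubble (n : ℕ) (f : Equiv.Perm (Fin (2 * n))) (a b : ℕ) : Prop :=
  a ≤ b ∧ b < 2 * n ∧
  (∀ i : Fin (2 * n), a ≤ i.val → i.val ≤ b → ¬ ShortEnd n f i) ∧
  (a = 0 ∨ ∃ j : Fin (2 * n), j.val + 1 = a ∧ ShortEnd n f j) ∧
  (b + 1 = 2 * n ∨ ∃ j : Fin (2 * n), j.val = b + 1 ∧ ShortEnd n f j)

/-- The size (number of vertices) of the bubble `[a, b]`. -/
def bubbleSize (a b : ℕ) : ℕ := b + 1 - a

/-- The number of bridges of the bubble `[a, b]` under the diagram `f`: the number of chords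
joining a vertex inside the bubble to one outside it. -/
noncomputable def bridges (n : ℕ) (f : Equiv.Perm (Fin (2 * n))) (a b : ℕ) : ℕ :=
  Nat.card {i : Fin (2 * n) // (a ≤ i.val ∧ i.val ≤ b) ∧ ¬ (a ≤ (f i).val ∧ (f i).val ≤ b)}

/-- `N n q b` : the number of pairs (diagram, bubble) where the diagram has `n` chords and the
bubble has size `q` and exactly `b` bridges. -/
noncomputable def N (n q b : ℕ) : ℕ :=
  Nat.card {p : Equiv.Perm (Fin (2 * n)) × ℕ × ℕ //
    IsDiagram n p.1 ∧ IsBubble n p.1 p.2.1 p.2.2 ∧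
    bubbleSize p.2.1 p.2.2 = q ∧ bridges n p.1 p.2.1 p.2.2 = b}

/-- A diagram is crystallized when all its bubbles are empty, i.e., no chord joins two vertices
lying in the same bubble. -/
def Crystallized (n : ℕ) (f : Equiv.Perm (Fin (2 * n))) : Prop :=
  ∀ a b, IsBubble n f a b → ∀ i : Fin (2 * n),
    a ≤ i.val → i.val ≤ b → ¬ (a ≤ (f i).val ∧ (f i).val ≤ b)

/-- The number of short chords of a diagram. -/
noncomputable def shortChords (n : ℕ) (f : Equiv.Perm (Fin (2 * n))) : ℕ :=
  Nat.card {i : Fin (2 * n) // (f i).val = i.val + 1}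

/-- `R n k` : the number of crystallized diagrams with `n` chords, exactly `k` of them short. -/
noncomputable def R (n k : ℕ) : ℕ :=
  Nat.card {f : Equiv.Perm (Fin (2 * n)) //
    IsDiagram n f ∧ Crystallized n f ∧ shortChords n f = k}

/-- A bubble of size 0: a cut position `a` with no vertices between its two delimiters, each of
which is either an end of the diagram or a short chord (a short chord ending at `a-1` on the
left, a short chord starting at `a` on the right). -/
def IsGap (n : ℕ) (f : Equiv.Perm (Fin (2 * n))) (a : ℕ) : Prop :=
  a ≤ 2 * n ∧
  (a = 0 ∨ ∃ j : Fin (2 * n), j.val + 1 = a ∧ (f j).val + 1 = j.val) ∧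
  (a = 2 * n ∨ ∃ j : Fin (2 * n), j.val = a ∧ (f j).val = j.val + 1)

/-- `C n k q` : the number of pairs (diagram, bubble of size `q`) where the diagram is a
crystallized diagram with `n` chords, exactly `k` of them short.  For `q = 0` the bubbles are
the empty gaps between consecutive short chords or between an end of the diagram and the
nearest short chord. -/
noncomputable def C (n k q : ℕ) : ℕ :=
  if q = 0 then
    Nat.card {p : Equiv.Perm (Fin (2 * n)) × ℕ //
      IsDiagram n p.1 ∧ Crystallized n p.1 ∧ shortChords n p.1 = k ∧ IsGap n p.1 p.2}
  else
    Nat.card {p : Equiv.Perm (Fin (2 * n)) × ℕ × ℕ //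
      IsDiagram n p.1 ∧ Crystallized n p.1 ∧ shortChords n p.1 = k ∧
      IsBubble n p.1 p.2.1 p.2.2 ∧ bubbleSize p.2.1 p.2.2 = q}

/-- The edge set of the complete graph on `m` vertices. -/
def Edge (m : ℕ) := {e : Sym2 (Fin m) // ¬ e.IsDiag}

instance (m : ℕ) : Fintype (Edge m) := Subtype.fintype _
instance (m : ℕ) : DecidableEq (Edge m) := Subtype.instDecidableEq

/-- `wvec p j` : the entry of `w = B p` at the vertex `j`, where `B` is the incidence matrix of
the complete graph; i.e., the sum of `p` over the edges incident to `j`. -/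
def wvec {m : ℕ} (p : Edge m → ℕ) (j : Fin m) : ℕ :=
  ∑ e : Edge m, if j ∈ e.val then p e else 0

open Finset

lemma sum_wvec {m : ℕ} (p : Edge m → ℕ) : ∑ j, wvec p j = 2 * ∑ e, p e := by
  unfold wvec
  rw [Finset.sum_comm, Finset.mul_sum]
  refine Finset.sum_congr rfl fun e _ => ?_
  obtain ⟨e, he⟩ := e
  induction e using Sym2.ind with
  | _ a b =>
    have hab : a ≠ b := by simpa using he
    have : (univ.filter fun j => j ∈ s(a, b)) = {a, b} := by ext; simp
    rw [← Finset.sum_filter, this, Finset.sum_pair hab]; ring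

noncomputable def U (m E : ℕ) (s : Fin m → ℕ) : ℚ :=
  ∑ p ∈ (piAntidiag univ E : Finset (Edge m → ℕ)) with wvec p = s, (∏ e, ((p e).factorial : ℚ))⁻¹

noncomputable def V (m E : ℕ) (s : Fin m → ℕ) (i j : Fin m) : ℚ :=
  ∑ p ∈ (piAntidiag univ E : Finset (Edge m → ℕ)) with
    wvec p + Pi.single i 1 + Pi.single j 1 = s, (∏ e, ((p e).factorial : ℚ))⁻¹

def mkE {m : ℕ} (i j : Fin m) (h : i ≠ j) : Edge m := ⟨s(i, j), by simpa using h⟩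

lemma wvec_add_single {m : ℕ} (p : Edge m → ℕ) (i j : Fin m) (h : i ≠ j) :
    wvec (p + Pi.single (mkE i j h) 1) = wvec p + Pi.single i 1 + Pi.single j 1 := by
  ext t
  simp only [wvec, Pi.add_apply]
  have : ∀ e : Edge m, (if t ∈ e.val then p e + (Pi.single (mkE i j h) 1 : Edge m → ℕ) e else 0)
      = (if t ∈ e.val then p e else 0) +
        (if e = mkE i j h then (if t ∈ (mkE i j h).val then 1 else 0) else 0) := by
    intro e
    by_cases he : e = mkE i j h
    · subst he; simp; split_ifs <;> simp
    · simp [he, Pi.single_eq_of_ne he]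
  rw [Finset.sum_congr rfl fun e _ => this e, Finset.sum_add_distrib, add_assoc]
  congr 1
  rw [Finset.sum_ite_eq', if_pos (Finset.mem_univ _)]
  simp only [mkE, Sym2.mem_iff, Pi.single_apply]
  by_cases h1 : t = i
  · subst h1; simp [h]
  · simp [h1]

lemma prod_fact_single {ι : Type*} [Fintype ι] [DecidableEq ι] (p : ι → ℕ) (a : ι) :
    ∏ e, (((p + Pi.single a 1 : ι → ℕ) e).factorial : ℚ) = (p a + 1) * ∏ e, ((p e).factorial : ℚ) := by
  rw [← Finset.mul_prod_erase univ _ (mem_univ a),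
    ← Finset.mul_prod_erase univ (fun e => ((p e).factorial : ℚ)) (mem_univ a), ← mul_assoc]
  congr 1
  · simp [Nat.factorial_succ]
  · refine Finset.prod_congr rfl fun e he => ?_
    simp [Pi.single_eq_of_ne (Finset.ne_of_mem_erase he)]

lemma wvec_eq_sum {m : ℕ} (p : Edge m → ℕ) (i : Fin m) :
    wvec p i = ∑ j : Fin m, if h : i ≠ j then p (mkE i j h) else 0 := by
  unfold wvec
  rw [← Finset.sum_filter]
  rw [Finset.sum_dite]
  simp only [sum_const_zero, add_zero]
  symm
  refine Finset.sum_bij (fun j _ => mkE i j.1 (Finset.mem_filter.1 j.2).2) ?_ ?_ ?_ ?_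
  · intro a _; exact Finset.mem_filter.2 ⟨Finset.mem_univ _, by simp [mkE]⟩
  · intro a _ b _ hab
    have := congrArg Subtype.val hab
    simp only [mkE, Sym2.congr_right] at this
    exact Subtype.ext this
  · rintro ⟨e, he⟩ hb
    have hb' : i ∈ e := (mem_filter.1 hb).2
    obtain ⟨j, rfl⟩ := Sym2.mem_iff_exists.1 hb'
    refine ⟨⟨j, by simpa using he⟩, mem_attach _ _, rfl⟩
  · intro a _; rfl

lemma U_rec (m E : ℕ) (s : Fin m → ℕ) (i : Fin m) :
    (s i : ℚ) * U m (E + 1) s = ∑ j, if i ≠ j then V m E s i j else 0 := by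
  unfold U
  rw [Finset.mul_sum]
  have h1 : ∀ p ∈ (piAntidiag univ (E+1) : Finset (Edge m → ℕ)).filter (fun p => wvec p = s),
      (s i : ℚ) * (∏ e, ((p e).factorial : ℚ))⁻¹ =
      ∑ j, if h : i ≠ j then (p (mkE i j h) : ℚ) * (∏ e, ((p e).factorial : ℚ))⁻¹ else 0 := by
    intro p hp
    rw [← (mem_filter.1 hp).2, wvec_eq_sum, Nat.cast_sum, Finset.sum_mul]
    refine Finset.sum_congr rfl fun j _ => ?_
    split_ifs <;> simp
  rw [Finset.sum_congr rfl h1, Finset.sum_comm]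
  refine Finset.sum_congr rfl fun j _ => ?_
  by_cases h : i ≠ j
  swap
  · simp [h]
  simp only [h, not_false_eq_true, dif_pos, if_pos, ne_eq]
  unfold V
  symm
  rw [← Finset.sum_filter_of_ne (s := filter _ (piAntidiag univ (E + 1))) (p := fun p : Edge m → ℕ => p (mkE i j h) ≠ 0)]
  swap
  · intro p _ hp h0; simp [h0] at hp
  refine Finset.sum_bij (fun p _ => p + Pi.single (mkE i j h) 1) ?_ ?_ ?_ ?_
  · intro p hp
    simp only [mem_filter, mem_piAntidiag, mem_univ, implies_true, and_true] at hp ⊢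
    rw [wvec_add_single]
    simp [hp.2, Finset.sum_add_distrib, ← hp.1]
  · intro p _ p' _ hh
    exact add_right_cancel hh
  · intro p hp
    simp only [mem_filter, mem_piAntidiag, mem_univ, implies_true, and_true] at hp
    have hle : Pi.single (mkE i j h) 1 ≤ p := by
      intro e
      by_cases he : e = mkE i j h
      · subst he; simp; omega
      · simp [Pi.single_eq_of_ne he]
    have heq : p - Pi.single (mkE i j h) 1 + Pi.single (mkE i j h) 1 = p := tsub_add_cancel_of_le hle
    refine ⟨p - Pi.single (mkE i j h) 1, ?_, heq⟩
    simp only [mem_filter, mem_piAntidiag, mem_univ, implies_true, and_true]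
    rw [← wvec_add_single _ _ _ h, heq]
    refine ⟨?_, hp.1.2⟩
    have h2 := hp.1.1
    rw [← heq] at h2
    simp only [Pi.add_apply, Finset.sum_add_distrib, Finset.sum_pi_single', mem_univ, if_true] at h2
    simpa using h2
  · intro p hp
    rw [prod_fact_single]
    simp only [Pi.add_apply, Pi.single_eq_same, Nat.cast_add, Nat.cast_one]
    have : (p (mkE i j h) : ℚ) + 1 ≠ 0 := by positivity
    rw [mul_inv, ← mul_assoc, mul_inv_cancel₀ this, one_mul]
    
lemma U_zero (m : ℕ) : U m 0 0 = 1 := by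
  unfold U
  rw [piAntidiag_zero, filter_singleton, if_pos]
  · simp
  · ext; simp [wvec]
section Count
variable {α : Type*} [Fintype α] [DecidableEq α] {m : ℕ}

def Aset (c : α → Fin m) (S : Finset α) (σ : Equiv.Perm α) : Finset (Equiv.Perm α) :=
  univ.filter fun f => (∀ x, f (f x) = x) ∧ (∀ x ∈ S, c (f x) ≠ c x) ∧ ∀ x, x ∉ S → f x = σ x

def cnt (c : α → Fin m) (S : Finset α) (i : Fin m) : ℕ := (S.filter fun x => c x = i).card

lemma cnt_erase (c : α → Fin m) (S : Finset α) (x : α) (hx : x ∈ S) :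
    cnt c (S.erase x) + Pi.single (c x) 1 = cnt c S := by
  ext i
  simp only [cnt, Pi.add_apply]
  rw [Finset.filter_erase]
  by_cases h : c x = i
  · subst h
    simp only [Pi.single_eq_same]
    apply Finset.card_erase_add_one
    simp [hx]
  · rw [Finset.erase_eq_of_notMem (by simp [h]), Pi.single_eq_of_ne (Ne.symm h)]; simp

lemma Aset_fiber (c : α → Fin m) (S : Finset α) (σ : Equiv.Perm α) (hσ : ∀ x, σ (σ x) = x)
    (hS : ∀ x, σ x ≠ x ↔ x ∉ S) (x y : α) (hx : x ∈ S) (hy : y ∈ S) (hc : c y ≠ c x) :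
    (Aset c S σ).filter (fun f => f x = y) =
      Aset c ((S.erase x).erase y) (Equiv.swap x y * σ) := by
  have hne : y ≠ x := fun h => hc (by rw [h])
  have sx : σ x = x := by by_contra h; exact (hS x).1 h hx
  have sy : σ y = y := by by_contra h; exact (hS y).1 h hy
  have key : ∀ z, z ∉ S → Equiv.swap x y (σ z) = σ z := by
    intro z hz
    apply Equiv.swap_apply_of_ne_of_ne
    · intro h; apply hz; have := hσ z; rw [h, sx] at this; exact this ▸ hx
    · intro h; apply hz; have := hσ z; rw [h, sy] at this; exact this ▸ hy
  ext f
  simp only [Aset, mem_filter, mem_univ, true_and, mem_erase, Equiv.Perm.mul_apply]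
  constructor
  · rintro ⟨⟨h1, h2, h3⟩, h4⟩
    refine ⟨h1, fun z hz => h2 z hz.2.2, fun z hz => ?_⟩
    by_cases hzx : z = x
    · subst hzx; rw [sx, h4, Equiv.swap_apply_left]
    by_cases hzy : z = y
    · subst hzy; rw [sy, ← h4, h1, Equiv.swap_apply_right]
    have hz' : z ∉ S := by tauto
    rw [h3 z hz', key z hz']
  · rintro ⟨h1, h2, h3⟩
    have fx : f x = y := by rw [h3 x (by tauto), sx, Equiv.swap_apply_left]
    have fy : f y = x := by rw [h3 y (by tauto), sy, Equiv.swap_apply_right]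
    refine ⟨⟨h1, fun z hz => ?_, fun z hz => ?_⟩, fx⟩
    · by_cases hzx : z = x
      · subst hzx; rw [fx]; exact hc
      by_cases hzy : z = y
      · subst hzy; rw [fy]; exact hc.symm
      exact h2 z ⟨hzy, hzx, hz⟩
    · rw [h3 z (by tauto), key z hz]

lemma card_Aset (c : α → Fin m) (E : ℕ) : ∀ (S : Finset α) (σ : Equiv.Perm α),
    (∀ x, σ (σ x) = x) → (∀ x, σ x ≠ x ↔ x ∉ S) → S.card = 2 * E →
    ((Aset c S σ).card : ℚ) = (∏ i, ((cnt c S i).factorial : ℚ)) * U m E (cnt c S) := by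
  induction E with
  | zero =>
    intro S σ hσ hS hE
    have : S = ∅ := by simpa using hE
    subst this
    have h0 : cnt c ∅ = 0 := by ext; simp [cnt]
    have h1 : Aset c ∅ σ = {σ} := by
      ext f
      simp only [Aset, mem_filter, mem_univ, true_and, mem_singleton]
      constructor
      · rintro ⟨_, _, h⟩; ext x; exact h x (by simp)
      · rintro rfl; exact ⟨hσ, by simp, by simp⟩
    rw [h1, h0, U_zero]; simp
  | succ E ih =>
    intro S σ hσ hS hE
    obtain ⟨x, hx⟩ : S.Nonempty := by
      rw [← Finset.card_pos]; omega
    have hmaps : ∀ f ∈ Aset c S σ, f x ∈ S.filter (fun y => c y ≠ c x) := by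
      intro f hf
      simp only [Aset, mem_filter, mem_univ, true_and] at hf
      rw [mem_filter]
      refine ⟨?_, hf.2.1 x hx⟩
      by_contra hfx
      have h1 := hf.2.2 _ hfx
      rw [hf.1] at h1
      have h2 := hσ (f x)
      rw [← h1] at h2
      have h3 : σ x = x := by by_contra h; exact (hS x).1 h hx
      rw [h3] at h2
      exact hfx (h2 ▸ hx)
    rw [Finset.card_eq_sum_card_fiberwise hmaps, Nat.cast_sum]
    have hterm : ∀ y ∈ S.filter (fun y => c y ≠ c x),
        ((((Aset c S σ).filter (fun f => f x = y)).card : ℕ) : ℚ) =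
        (∏ i, ((cnt c S i).factorial : ℚ)) / (cnt c S (c x)) *
          (V m E (cnt c S) (c x) (c y) / cnt c S (c y)) := by
      intro y hy
      obtain ⟨hyS, hyc⟩ := mem_filter.1 hy
      have hne : y ≠ x := fun h => hyc (by rw [h])
      have hyS' : y ∈ S.erase x := mem_erase.2 ⟨hne, hyS⟩
      have e1 := cnt_erase c S x hx
      have e2 := cnt_erase c (S.erase x) y hyS'
      set s' := cnt c ((S.erase x).erase y) with hs'
      rw [Aset_fiber c S σ hσ hS x y hx hyS hyc, ih]
      · have e3 : s' + Pi.single (c x) 1 + Pi.single (c y) 1 = cnt c S := by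
          rw [← e1, ← e2]; abel
        have hU : U m E s' = V m E (cnt c S) (c x) (c y) := by
          unfold U V
          congr 1
          apply Finset.filter_congr
          intro p _
          rw [← e3]
          simp [add_left_inj]
        rw [← hs', hU, ← e3, prod_fact_single (s' + Pi.single (c x) 1), prod_fact_single s']
        have a1 : (((s' + Pi.single (c x) 1 + Pi.single (c y) 1 : Fin m → ℕ) (c x) : ℕ) : ℚ)
            = s' (c x) + 1 := by simp [Pi.single_eq_of_ne hyc.symm]
        have a2 : (((s' + Pi.single (c x) 1 + Pi.single (c y) 1 : Fin m → ℕ) (c y) : ℕ) : ℚ)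
            = s' (c y) + 1 := by simp [Pi.single_eq_of_ne hyc]
        have a3 : (((s' + Pi.single (c x) 1 : Fin m → ℕ) (c y) : ℕ) : ℚ)
            = s' (c y) := by simp [Pi.single_eq_of_ne hyc]
        rw [a1, a2, a3]
        have b1 : (s' (c x) : ℚ) + 1 ≠ 0 := by positivity
        have b2 : (s' (c y) : ℚ) + 1 ≠ 0 := by positivity
        field_simp
      · intro z
        simp only [Equiv.Perm.mul_apply]
        have sx : σ x = x := by by_contra h; exact (hS x).1 h hx
        have sy : σ y = y := by by_contra h; exact (hS y).1 h hyS
        by_cases hzx : z = x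
        · subst hzx; simp [sx, sy]
        by_cases hzy : z = y
        · subst hzy; simp [sx, sy]
        have h1 : σ z ≠ x := fun h => hzx (by rw [← hσ z, h, sx])
        have h2 : σ z ≠ y := fun h => hzy (by rw [← hσ z, h, sy])
        rw [Equiv.swap_apply_of_ne_of_ne h1 h2, hσ, Equiv.swap_apply_of_ne_of_ne hzx hzy]
      · intro z
        simp only [Equiv.Perm.mul_apply, mem_erase]
        have sx : σ x = x := by by_contra h; exact (hS x).1 h hx
        have sy : σ y = y := by by_contra h; exact (hS y).1 h hyS
        by_cases hzx : z = x
        · subst hzx; simp [sx, hne]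
        by_cases hzy : z = y
        · subst hzy; simp [sy, hne.symm]
        have h1 : σ z ≠ x := fun h => hzx (by rw [← hσ z, h, sx])
        have h2 : σ z ≠ y := fun h => hzy (by rw [← hσ z, h, sy])
        rw [Equiv.swap_apply_of_ne_of_ne h1 h2, hS z]
        tauto
      · rw [card_erase_of_mem hyS', card_erase_of_mem hx]; omega
    rw [Finset.sum_congr rfl hterm, ← Finset.mul_sum]
    have hcx : (cnt c S (c x) : ℚ) ≠ 0 := by
      have : 0 < cnt c S (c x) := Finset.card_pos.2 ⟨x, by simp [hx]⟩
      positivity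
    rw [div_mul_eq_mul_div, div_eq_iff hcx, mul_assoc, mul_comm (U _ _ _), U_rec]
    congr 1
    rw [Finset.sum_filter, ← Finset.sum_fiberwise' S c
      (fun j => if j ≠ c x then V m E (cnt c S) (c x) j / cnt c S j else 0)]
    refine Finset.sum_congr rfl fun j _ => ?_
    rw [Finset.sum_const, nsmul_eq_mul]
    change (cnt c S j : ℚ) * _ = _
    by_cases hj : c x = j
    · simp [hj]
    rw [if_pos (Ne.symm hj), if_pos hj]
    by_cases h0 : cnt c S j = 0
    · rw [h0]
      have : V m E (cnt c S) (c x) j = 0 := by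
        unfold V
        rw [Finset.filter_false_of_mem, Finset.sum_empty]
        intro p _ hp
        have := congrFun hp j
        simp [h0] at this
      simp [this]
    · have : (cnt c S j : ℚ) ≠ 0 := by exact_mod_cast h0
      field_simp
end Count
lemma multi_vandermonde (k q : ℕ) (hk : 1 ≤ k) (w : Fin k → ℕ) :
    ∑ r ∈ (piAntidiag univ q : Finset (Fin k → ℕ)), ∏ i, (w i + r i).choose (w i) =
      (∑ i, w i + k - 1 + q).choose q := by
  have h1 : ∏ i : Fin k, (PowerSeries.mk 1 : PowerSeries ℤ) ^ (w i + 1) =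
      (PowerSeries.mk 1 : PowerSeries ℤ) ^ ((∑ i, w i + k - 1) + 1) := by
    rw [Finset.prod_pow_eq_pow_sum, Finset.sum_add_distrib]
    congr 1
    simp; omega
  have h2 := congrArg (PowerSeries.coeff q) h1
  rw [PowerSeries.coeff_prod] at h2
  simp only [PowerSeries.mk_one_pow_eq_mk_choose_add, PowerSeries.coeff_mk] at h2
  have h3 : ∑ r ∈ (piAntidiag univ q : Finset (Fin k → ℕ)), ∏ i, (w i + r i).choose (w i) =
      ∑ r ∈ finsuppAntidiag (univ : Finset (Fin k)) q, ∏ i, (w i + r i).choose (w i) := by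
    refine Finset.sum_bij (fun r _ => Finsupp.equivFunOnFinite.symm r) ?_ ?_ ?_ ?_
    · intro r hr
      simp only [mem_piAntidiag] at hr
      simp [mem_finsuppAntidiag, hr.1]
    · intro r _ r' _ h; simpa using h
    · intro r hr
      simp only [mem_finsuppAntidiag] at hr
      exact ⟨r, by simp [hr.1], by ext; simp⟩
    · intro r _; simp
  rw [h3, ← Nat.choose_symm_add]
  exact_mod_cast h2

section Split
variable {k : ℕ} (j : Fin (k + 1))

def phiFun : Edge k ⊕ Fin k → Edge (k + 1)
  | Sum.inl e => ⟨e.1.map j.succAbove, by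
      have := e.2
      rwa [Sym2.isDiag_map (Fin.succAbove_right_injective)]⟩
  | Sum.inr i => mkE j (j.succAbove i) (Fin.succAbove_ne j i).symm

lemma phi_bij : Function.Bijective (phiFun j) := by
  constructor
  · rintro (e | i) (e' | i') h
    · have h := congrArg Subtype.val h
      exact congrArg _ (Subtype.ext (Sym2.map.injective Fin.succAbove_right_injective h))
    · have h := congrArg Subtype.val h
      have hm : j ∈ (phiFun j (Sum.inr i')).val := by simp [phiFun, mkE]
      rw [← h] at hm
      obtain ⟨a, _, ha⟩ := Sym2.mem_map.1 hm
      exact absurd ha (Fin.succAbove_ne j a)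
    · have h := congrArg Subtype.val h
      have hm : j ∈ (phiFun j (Sum.inr i)).val := by simp [phiFun, mkE]
      rw [h] at hm
      obtain ⟨a, _, ha⟩ := Sym2.mem_map.1 hm
      exact absurd ha (Fin.succAbove_ne j a)
    · have h := congrArg Subtype.val h
      simp only [phiFun, mkE, Sym2.congr_right] at h
      rw [Fin.succAbove_right_injective h]
  · rintro ⟨e, he⟩
    by_cases hj : j ∈ e
    · obtain ⟨t, rfl⟩ := Sym2.mem_iff_exists.1 hj
      have hne : t ≠ j := by rintro rfl; simp at he
      obtain ⟨i, rfl⟩ := Fin.exists_succAbove_eq hne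
      exact ⟨Sum.inr i, rfl⟩
    · induction e using Sym2.ind with
      | _ a b =>
        have hab : a ≠ b := by simpa using he
        have ha : a ≠ j := by rintro rfl; simp at hj
        have hb : b ≠ j := by rintro rfl; simp at hj
        obtain ⟨a, rfl⟩ := Fin.exists_succAbove_eq ha
        obtain ⟨b, rfl⟩ := Fin.exists_succAbove_eq hb
        exact ⟨Sum.inl (mkE a b (fun h => hab (by rw [h]))), rfl⟩

noncomputable def phi : Edge k ⊕ Fin k ≃ Edge (k + 1) := Equiv.ofBijective _ (phi_bij j)

noncomputable def comb (p : Edge k → ℕ) (r : Fin k → ℕ) : Edge (k + 1) → ℕ :=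
  fun e => Sum.elim p r ((phi j).symm e)

lemma wvec_phi (P : Edge (k + 1) → ℕ) (t : Fin (k + 1)) :
    wvec P t = (∑ e : Edge k, if t ∈ (phiFun j (Sum.inl e)).val then P (phi j (Sum.inl e)) else 0) +
      ∑ i : Fin k, if t ∈ (phiFun j (Sum.inr i)).val then P (phi j (Sum.inr i)) else 0 := by
  unfold wvec
  rw [← (phi j).sum_comp, Fintype.sum_sum_type]
  rfl

lemma wvec_self (P : Edge (k + 1) → ℕ) : wvec P j = ∑ i, P (phi j (Sum.inr i)) := by
  rw [wvec_phi j]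
  have h1 : ∀ e : Edge k, j ∉ (phiFun j (Sum.inl e)).val := by
    intro e hm
    obtain ⟨a, _, ha⟩ := Sym2.mem_map.1 hm
    exact absurd ha (Fin.succAbove_ne j a)
  have h2 : ∀ i : Fin k, j ∈ (phiFun j (Sum.inr i)).val := by
    intro i; simp [phiFun, mkE]
  simp [h1, h2]

lemma wvec_succAbove (P : Edge (k + 1) → ℕ) (t : Fin k) : wvec P (j.succAbove t) =
    wvec (fun e => P (phi j (Sum.inl e))) t + P (phi j (Sum.inr t)) := by
  rw [wvec_phi j]
  have h1 : ∀ e : Edge k, j.succAbove t ∈ (phiFun j (Sum.inl e)).val ↔ t ∈ e.val := by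
    intro e
    simp only [phiFun, Sym2.mem_map]
    constructor
    · rintro ⟨a, ha, h⟩; rwa [← Fin.succAbove_right_injective h]
    · intro h; exact ⟨t, h, rfl⟩
  have h2 : ∀ i : Fin k, j.succAbove t ∈ (phiFun j (Sum.inr i)).val ↔ t = i := by
    intro i; simp [phiFun, mkE, Fin.succAbove_ne]
  simp only [h1, h2, Finset.sum_ite_eq, mem_univ, if_true]
  rfl

lemma sum_phi (P : Edge (k + 1) → ℕ) : ∑ e, P e =
    ∑ e, P (phi j (Sum.inl e)) + ∑ i, P (phi j (Sum.inr i)) := by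
  rw [← (phi j).sum_comp, Fintype.sum_sum_type]

lemma prod_phi (P : Edge (k + 1) → ℚ) : ∏ e, P e =
    (∏ e, P (phi j (Sum.inl e))) * ∏ i, P (phi j (Sum.inr i)) := by
  rw [← (phi j).prod_comp, Fintype.prod_sum_type]

lemma comb_inl (p : Edge k → ℕ) (r : Fin k → ℕ) (e) : comb j p r (phi j (Sum.inl e)) = p e := by
  simp [comb]
lemma comb_inr (p : Edge k → ℕ) (r : Fin k → ℕ) (e) : comb j p r (phi j (Sum.inr e)) = r e := by
  simp [comb]

lemma sum_split (q M : ℕ) (hk : 1 ≤ k) :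
    ∑ P ∈ (piAntidiag univ (M + q) : Finset (Edge (k + 1) → ℕ)) with wvec P j = q,
      (∏ i, ((wvec P i).factorial : ℚ)) * (∏ e, ((P e).factorial : ℚ))⁻¹ =
    (q.factorial * (2 * M + k - 1 + q).choose q : ℚ) *
      ∑ p ∈ (piAntidiag univ M : Finset (Edge k → ℕ)),
        (∏ i, ((wvec p i).factorial : ℚ)) / (∏ e, ((p e).factorial : ℚ)) := by
  have h1 : ∑ P ∈ (piAntidiag univ (M + q) : Finset (Edge (k + 1) → ℕ)) with wvec P j = q,
      (∏ i, ((wvec P i).factorial : ℚ)) * (∏ e, ((P e).factorial : ℚ))⁻¹ =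
      ∑ x ∈ (piAntidiag univ M : Finset (Edge k → ℕ)) ×ˢ (piAntidiag univ q : Finset (Fin k → ℕ)),
        ((q.factorial : ℚ) * ∏ i, ((wvec x.1 i + x.2 i).factorial : ℚ)) *
          ((∏ e, ((x.1 e).factorial : ℚ)) * ∏ i, ((x.2 i).factorial : ℚ))⁻¹ := by
    symm
    refine Finset.sum_bij (fun x _ => comb j x.1 x.2) ?_ ?_ ?_ ?_
    · rintro ⟨p, r⟩ h
      simp only [mem_product, mem_piAntidiag, mem_filter, mem_univ, implies_true, and_true] at h ⊢
      rw [wvec_self, sum_phi j]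
      simp [comb_inl, comb_inr, h]
    · rintro ⟨p, r⟩ h ⟨p', r'⟩ h' hh
      ext e
      all_goals dsimp only at hh ⊢
      · rw [← comb_inl j p r, hh, comb_inl]
      · rw [← comb_inr j p r, hh, comb_inr]
    · intro P hP
      simp only [mem_piAntidiag, mem_filter, mem_univ, implies_true, and_true] at hP
      rw [wvec_self, sum_phi j] at hP
      refine ⟨(fun e => P (phi j (Sum.inl e)), fun e => P (phi j (Sum.inr e))), ?_, ?_⟩
      · simp only [mem_product, mem_piAntidiag, mem_univ, implies_true, and_true]
        omega
      · funext e
        obtain ⟨x | x, rfl⟩ := (phi j).surjective e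
        · rw [comb_inl]
        · rw [comb_inr]
    · rintro ⟨p, r⟩ h
      simp only [mem_product, mem_piAntidiag, mem_univ, implies_true, and_true] at h
      rw [prod_phi j, Fin.prod_univ_succAbove _ j, wvec_self]
      simp only [wvec_succAbove, comb_inl, comb_inr, h.2]
  rw [h1, Finset.sum_product, Finset.mul_sum]
  refine Finset.sum_congr rfl fun p hp => ?_
  simp only [mem_piAntidiag, mem_univ, implies_true, and_true] at hp
  have hv := multi_vandermonde k q hk (wvec p)
  rw [sum_wvec, hp] at hv
  rw [← hv, Nat.cast_sum, Finset.mul_sum, Finset.sum_mul]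
  refine Finset.sum_congr rfl fun r _ => ?_
  have h3 : ∏ i, ((wvec p i + r i).factorial : ℚ) = ((∏ i, (wvec p i + r i).choose (wvec p i) : ℕ) : ℚ) *
      (∏ i, ((wvec p i).factorial : ℚ)) * ∏ i, ((r i).factorial : ℚ) := by
    rw [Nat.cast_prod, ← Finset.prod_mul_distrib, ← Finset.prod_mul_distrib]
    refine Finset.prod_congr rfl fun i _ => ?_
    rw [← Nat.add_choose_mul_factorial_mul_factorial, Nat.choose_symm_add]
    push_cast; ring
  simp only [h3]
  have b1 : ∏ i, ((r i).factorial : ℚ) ≠ 0 := by positivity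
  have b2 : ∏ e, ((p e).factorial : ℚ) ≠ 0 := by positivity
  field_simp

lemma sum_comp (q M : ℕ) (hk : 1 ≤ k) :
    ∑ s ∈ (piAntidiag univ (2 * (M + q)) : Finset (Fin (k + 1) → ℕ)) with s j = q,
      (∏ i, ((s i).factorial : ℚ)) * U (k + 1) (M + q) s =
    (q.factorial * (2 * M + k - 1 + q).choose q : ℚ) *
      ∑ p ∈ (piAntidiag univ M : Finset (Edge k → ℕ)),
        (∏ i, ((wvec p i).factorial : ℚ)) / (∏ e, ((p e).factorial : ℚ)) := by
  rw [← sum_split j q M hk]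
  rw [← Finset.sum_fiberwise_of_maps_to (g := wvec)
    (t := (piAntidiag univ (2 * (M + q)) : Finset (Fin (k + 1) → ℕ)).filter (fun s => s j = q))]
  · refine Finset.sum_congr rfl fun s hs => ?_
    unfold U
    rw [Finset.mul_sum, Finset.filter_filter]
    have : (piAntidiag univ (M + q) : Finset (Edge (k + 1) → ℕ)).filter (fun p => wvec p = s) =
      (piAntidiag univ (M + q) : Finset (Edge (k + 1) → ℕ)).filter
        (fun p => wvec p j = q ∧ wvec p = s) := by
      apply Finset.filter_congr
      intro p _
      have := (mem_filter.1 hs).2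
      constructor
      · rintro rfl; exact ⟨this, rfl⟩
      · exact fun h => h.2
    rw [this]
    refine Finset.sum_congr rfl fun p hp => ?_
    rw [(mem_filter.1 hp).2.2]
  · intro p hp
    simp only [mem_piAntidiag, mem_filter, mem_univ, implies_true, and_true] at hp ⊢
    rw [sum_wvec, hp.1]
    exact ⟨rfl, hp.2⟩
end Split
section Struct

def IsP (n k : ℕ) (e P : ℕ → ℕ) : Prop :=
  P 0 = 0 ∧ (∀ i, P (i + 1) = P i + e i + 2) ∧ P (k + 1) = 2 * n + 2

def Compat (n k : ℕ) (e P : ℕ → ℕ) (f : Equiv.Perm (Fin (2 * n))) : Prop :=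
  ∀ x : Fin (2 * n), (f x).val = x.val + 1 ↔ ∃ i, i < k ∧ x.val = P i + e i

variable {n k : ℕ} {e P : ℕ → ℕ} {f : Equiv.Perm (Fin (2 * n))}

lemma IsP.lt (h : IsP n k e P) {i j : ℕ} (hij : i < j) : P i + e i + 2 ≤ P j := by
  have hm : StrictMono P := strictMono_nat_of_lt_succ fun i => by rw [h.2.1 i]; omega
  rw [← h.2.1 i]
  exact hm.monotone hij

lemma IsP.le (h : IsP n k e P) {i : ℕ} (hi : i ≤ k) : P i + e i ≤ 2 * n := by
  have := h.lt (Nat.lt_succ_of_le hi)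
  have := h.2.2
  simp only [Nat.succ_eq_add_one] at *
  omega

lemma IsP.le' (h : IsP n k e P) {i : ℕ} (hi : i < k) : P i + e i + 2 ≤ 2 * n := by
  have := h.lt hi
  have := h.le (le_refl k)
  omega

lemma IsP.uniq (h : IsP n k e P) {i j x : ℕ} (h1 : P i ≤ x) (h2 : x < P i + e i + 2)
    (h3 : P j ≤ x) (h4 : x < P j + e j + 2) : i = j := by
  rcases lt_trichotomy i j with hh | hh | hh
  · have := h.lt hh; omega
  · exact hh
  · have := h.lt hh; omega

lemma IsP.block (h : IsP n k e P) {x : ℕ} (hx : x < 2 * n) :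
    P (Nat.findGreatest (fun i => P i ≤ x) k) ≤ x ∧
    x < P (Nat.findGreatest (fun i => P i ≤ x) k) + e (Nat.findGreatest (fun i => P i ≤ x) k) + 2 := by
  have h1 : P (Nat.findGreatest (fun i => P i ≤ x) k) ≤ x :=
    Nat.findGreatest_spec (P := fun i => P i ≤ x) (Nat.zero_le k) (by rw [h.1]; omega)
  refine ⟨h1, ?_⟩
  rw [← h.2.1]
  have h2 := Nat.findGreatest_le (P := fun i => P i ≤ x) k
  rcases h2.lt_or_eq with h3 | h3
  · by_contra hc
    exact Nat.findGreatest_is_greatest (P := fun i => P i ≤ x) (Nat.lt_succ_self _) h3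
      (by simpa using hc)
  · rw [h3, h.2.2]; omega

lemma IsP.exists_block (h : IsP n k e P) {x : ℕ} (hx : x < 2 * n) :
    ∃ i, i ≤ k ∧ P i ≤ x ∧ x < P i + e i + 2 :=
  ⟨_, Nat.findGreatest_le k, h.block hx⟩

lemma IsP.lt_k (h : IsP n k e P) {i x : ℕ} (hi : i ≤ k) (hx : x < 2 * n) (hp : P i + e i ≤ x) :
    i < k := by
  rcases hi.lt_or_eq with h1 | rfl
  · exact h1
  · have := h.2.1 i; have := h.2.2; omega

lemma compat_right (h : IsP n k e P) (hd : IsDiagram n f) (hc : Compat n k e P f)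
    (x : Fin (2 * n)) : (f x).val + 1 = x.val ↔ ∃ i, i < k ∧ x.val = P i + e i + 1 := by
  constructor
  · intro hx
    have h1 : (f (f x)).val = (f x).val + 1 := by rw [hd.1]; omega
    obtain ⟨i, hi, h2⟩ := (hc _).1 h1
    exact ⟨i, hi, by omega⟩
  · rintro ⟨i, hi, hx⟩
    have hl := h.le' hi
    have h1 := (hc ⟨P i + e i, by omega⟩).2 ⟨i, hi, rfl⟩
    have h2 : f ⟨P i + e i, by omega⟩ = x := Fin.ext (by rw [h1]; simp [hx])
    rw [← h2, hd.1, h2, hx]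

lemma short_block (h : IsP n k e P) (hd : IsDiagram n f) (hc : Compat n k e P f)
    (x : Fin (2 * n)) {i : ℕ} (hi : i ≤ k) (h1 : P i ≤ x.val) (h2 : x.val < P i + e i + 2) :
    ShortEnd n f x ↔ P i + e i ≤ x.val := by
  unfold ShortEnd
  rw [hc, compat_right h hd hc]
  constructor
  · rintro (⟨j, hj, hx⟩ | ⟨j, hj, hx⟩)
    · have := h.uniq h1 h2 (j := j) (by omega) (by omega); subst this; omega
    · have := h.uniq h1 h2 (j := j) (by omega) (by omega); subst this; omega
  · intro hp
    have := h.lt_k hi x.2 hp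
    by_cases hx : x.val = P i + e i
    · exact Or.inl ⟨i, this, hx⟩
    · exact Or.inr ⟨i, this, by omega⟩

lemma bubble_iff (h : IsP n k e P) (hd : IsDiagram n f) (hc : Compat n k e P f) (a b : ℕ) :
    IsBubble n f a b ↔ ∃ i, i ≤ k ∧ a = P i ∧ b + 1 = P i + e i ∧ 0 < e i := by
  constructor
  · rintro ⟨hab, hb, hns, hl, hr⟩
    obtain ⟨i, hi, h1, h2⟩ := h.exists_block (x := a) (by omega)
    have ha : a < P i + e i := by
      have h3 := hns ⟨a, by omega⟩ le_rfl hab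
      rw [short_block h hd hc _ hi h1 h2] at h3
      simpa using h3
    have hai : a = P i := by
      by_contra hne
      rcases hl with h0 | ⟨j, hj, hs⟩
      · omega
      · rw [short_block h hd hc _ hi (by omega) (by omega)] at hs
        omega
    have hbi : b < P i + e i := by
      by_contra hlt
      have h3 := hns ⟨P i + e i, by omega⟩ (by simp; omega) (by simp; omega)
      rw [short_block h hd hc _ hi (by simp) (by simp)] at h3
      simp at h3
    refine ⟨i, hi, hai, ?_, by omega⟩
    have := h.le hi
    rcases hr with h0 | ⟨j, hj, hs⟩
    · omega
    · rw [short_block h hd hc _ hi (by omega) (by omega)] at hs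
      omega
  · rintro ⟨i, hi, rfl, hb, he⟩
    have hle := h.le hi
    refine ⟨by omega, by omega, ?_, ?_, ?_⟩
    · intro x hx1 hx2
      rw [short_block h hd hc x hi (by omega) (by omega)]
      omega
    · rcases i with _ | i
      · exact Or.inl h.1
      · right
        have h1 := h.2.1 i
        refine ⟨⟨P i + e i + 1, by omega⟩, by simp; omega, ?_⟩
        rw [short_block h hd hc _ (i := i) (by omega) (by simp; omega) (by simp)]
        simp
    · rcases hi.lt_or_eq with h1 | rfl
      · right
        have h2 := h.le' h1
        refine ⟨⟨P i + e i, by omega⟩, by simp; omega, ?_⟩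
        rw [short_block h hd hc _ hi (by simp) (by simp)]
      · left; have := h.2.1 i; have := h.2.2; omega

lemma gap_iff (h : IsP n k e P) (hd : IsDiagram n f) (hc : Compat n k e P f) (a : ℕ) :
    IsGap n f a ↔ ∃ i, i ≤ k ∧ a = P i ∧ e i = 0 := by
  constructor
  · rintro ⟨ha, hl, hr⟩
    obtain ⟨i, hi, rfl⟩ : ∃ i, i ≤ k ∧ a = P i := by
      rcases hl with rfl | ⟨j, hj, hs⟩
      · exact ⟨0, Nat.zero_le _, h.1.symm⟩
      · obtain ⟨i, hi, hx⟩ := (compat_right h hd hc j).1 hs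
        exact ⟨i + 1, hi, by rw [h.2.1]; omega⟩
    refine ⟨i, hi, rfl, ?_⟩
    rcases hr with h0 | ⟨j, hj, hs⟩
    · have := h.le hi; omega
    · obtain ⟨i', hi', hx⟩ := (hc j).1 hs
      have := h.uniq (i := i) (j := i') (x := P i) le_rfl (by omega) (by omega) (by omega)
      subst this; omega
  · rintro ⟨i, hi, rfl, he⟩
    have := h.le hi
    refine ⟨by omega, ?_, ?_⟩
    · rcases i with _ | i
      · exact Or.inl h.1
      · right
        have h1 := h.2.1 i
        refine ⟨⟨P i + e i + 1, by omega⟩, by simp; omega, ?_⟩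
        rw [compat_right h hd hc]
        exact ⟨i, by omega, rfl⟩
    · rcases hi.lt_or_eq with h1 | rfl
      · right
        have h2 := h.le' h1
        refine ⟨⟨P i + e i, by omega⟩, by simp; omega, ?_⟩
        rw [hc]
        exact ⟨i, h1, rfl⟩
      · left; have := h.2.1 i; have := h.2.2; omega

lemma shortEnd_f (hd : IsDiagram n f) (x : Fin (2 * n)) (hs : ShortEnd n f (f x)) :
    ShortEnd n f x := by
  unfold ShortEnd at *
  rw [hd.1] at hs
  omega

lemma cryst_iff (h : IsP n k e P) (hd : IsDiagram n f) (hc : Compat n k e P f) :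
    Crystallized n f ↔ ∀ (x : Fin (2 * n)) (i : ℕ), i ≤ k → P i ≤ x.val → x.val < P i + e i →
      ¬ (P i ≤ (f x).val ∧ (f x).val < P i + e i + 2) := by
  constructor
  · intro hcr x i hi h1 h2 ⟨h3, h4⟩
    have hb := (bubble_iff h hd hc (P i) (P i + e i - 1)).2 ⟨i, hi, rfl, by omega, by omega⟩
    have h5 := hcr _ _ hb x h1 (by omega)
    have h6 := (short_block h hd hc (f x) hi h3 h4).2 (by omega)
    have h7 := (short_block h hd hc x hi h1 (by omega)).1 (shortEnd_f hd x h6)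
    omega
  · intro hh a b hb x h1 h2 ⟨h3, h4⟩
    obtain ⟨i, hi, rfl, h5, h6⟩ := (bubble_iff h hd hc a b).1 hb
    exact hh x i hi h1 (by omega) ⟨h3, by omega⟩

def Lset (n : ℕ) (f : Equiv.Perm (Fin (2 * n))) : Finset ℕ :=
  (univ.filter fun x : Fin (2 * n) => (f x).val = x.val + 1).map Fin.valEmbedding

lemma card_Lset : (Lset n f).card = shortChords n f := by
  unfold Lset shortChords
  rw [Finset.card_map]
  exact (Nat.subtype_card _ (by simp)).symm

lemma compat_iff (h : IsP n k e P) :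
    Compat n k e P f ↔ Lset n f = (range k).image (fun i => P i + e i) := by
  constructor
  · intro hc
    ext y
    simp only [Lset, mem_map, mem_filter, mem_univ, true_and, mem_image, mem_range,
      Fin.valEmbedding_apply]
    constructor
    · rintro ⟨x, hx, rfl⟩
      obtain ⟨i, hi, hh⟩ := (hc x).1 hx
      exact ⟨i, hi, hh.symm⟩
    · rintro ⟨i, hi, rfl⟩
      have := h.le' hi
      exact ⟨⟨P i + e i, by omega⟩, (hc _).2 ⟨i, hi, rfl⟩, rfl⟩
  · intro hL x
    have := congrArg (fun s => x.val ∈ s) hL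
    simp only [Lset, mem_map, mem_filter, mem_univ, true_and, mem_image, mem_range,
      Fin.valEmbedding_apply, eq_iff_iff] at this
    constructor
    · intro hx
      obtain ⟨i, hi, hh⟩ := this.1 ⟨x, hx, rfl⟩
      exact ⟨i, hi, hh.symm⟩
    · rintro ⟨i, hi, hh⟩
      obtain ⟨y, hy, hyx⟩ := this.2 ⟨i, hi, hh.symm⟩
      rwa [← Fin.ext hyx]

lemma compat_short (h : IsP n k e P) (hc : Compat n k e P f) : shortChords n f = k := by
  rw [← card_Lset, (compat_iff h).1 hc, Finset.card_image_of_injective, card_range]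
  intro i j hij
  have hij : P i + e i = P j + e j := hij
  rcases lt_trichotomy i j with hh | hh | hh
  · have := h.lt hh; omega
  · exact hh
  · have := h.lt hh; omega

lemma compat_uniq {e' P' : ℕ → ℕ} (h : IsP n k e P) (h' : IsP n k e' P')
    (hc : Compat n k e P f) (hc' : Compat n k e' P' f) : ∀ i, i ≤ k → P i = P' i ∧ e i = e' i := by
  have key : ∀ i, i ≤ k → P i = P' i → e i = e' i := by
    intro i hi hP
    rcases hi.lt_or_eq with hlt | rfl
    · have hL := ((compat_iff h).1 hc).symm.trans ((compat_iff h').1 hc')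
      have m1 : P i + e i ∈ (range k).image (fun i => P' i + e' i) := by
        rw [← hL]; exact mem_image.2 ⟨i, mem_range.2 hlt, rfl⟩
      have m2 : P' i + e' i ∈ (range k).image (fun i => P i + e i) := by
        rw [hL]; exact mem_image.2 ⟨i, mem_range.2 hlt, rfl⟩
      obtain ⟨t, _, ht⟩ := mem_image.1 m1
      obtain ⟨u, _, hu⟩ := mem_image.1 m2
      have a1 : i ≤ t := by
        by_contra hh; have := h'.lt (not_le.1 hh); omega
      have a2 : i ≤ u := by
        by_contra hh; have := h.lt (not_le.1 hh); omega
      rcases a1.lt_or_eq with b1 | rfl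
      · have := h'.lt b1
        rcases a2.lt_or_eq with b2 | rfl
        · have := h.lt b2; omega
        · omega
      · omega
    · have := h.2.1 i; have := h'.2.1 i; have := h.2.2; have := h'.2.2; omega
  intro i
  induction i with
  | zero => intro hi; have h0 : P 0 = P' 0 := by rw [h.1, h'.1]
            exact ⟨h0, key 0 hi h0⟩
  | succ i ih =>
    intro hi
    have ⟨h1, h2⟩ := ih (by omega)
    have h3 : P (i + 1) = P' (i + 1) := by rw [h.2.1, h'.2.1, h1, h2]
    exact ⟨h3, key _ hi h3⟩

lemma exists_sigma (h : IsP n k e P) : ∃ σ : Equiv.Perm (Fin (2 * n)), (∀ x, σ (σ x) = x) ∧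
    ∀ (x : Fin (2 * n)) (i : ℕ), i ≤ k → P i ≤ x.val → x.val < P i + e i + 2 →
      (x.val < P i + e i → σ x = x) ∧ (x.val = P i + e i → (σ x).val = x.val + 1) ∧
      (x.val = P i + e i + 1 → (σ x).val + 1 = x.val) := by
  have hex : ∀ x : Fin (2 * n), ∃ y : Fin (2 * n), 
    ∀ (i : ℕ), i ≤ k → P i ≤ x.val → x.val < P i + e i + 2 →
      (x.val < P i + e i → y = x) ∧ (x.val = P i + e i → y.val = x.val + 1) ∧
      (x.val = P i + e i + 1 → y.val + 1 = x.val) := by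
    intro x
    obtain ⟨i, hi, h1, h2⟩ := h.exists_block x.2
    by_cases c1 : x.val < P i + e i
    · refine ⟨x, fun j hj h3 h4 => ?_⟩
      have := h.uniq h1 h2 h3 h4; subst this
      exact ⟨fun _ => rfl, by omega, by omega⟩
    have hlt := h.le' (h.lt_k hi x.2 (by omega))
    by_cases c2 : x.val = P i + e i
    · refine ⟨⟨x.val + 1, by omega⟩, fun j hj h3 h4 => ?_⟩
      have := h.uniq h1 h2 h3 h4; subst this
      exact ⟨by omega, fun _ => rfl, by omega⟩
    · refine ⟨⟨x.val - 1, by omega⟩, fun j hj h3 h4 => ?_⟩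
      have := h.uniq h1 h2 h3 h4; subst this
      exact ⟨by omega, by omega, fun _ => by simp; omega⟩
  choose g hg using hex
  have hinv : Function.Involutive g := by
    intro x
    obtain ⟨i, hi, h1, h2⟩ := h.exists_block x.2
    obtain ⟨g1, g2, g3⟩ := hg x i hi h1 h2
    by_cases c1 : x.val < P i + e i
    · rw [g1 c1, g1 c1]
    by_cases c2 : x.val = P i + e i
    · have g4 := g2 c2
      obtain ⟨_, _, k3⟩ := hg (g x) i hi (by omega) (by omega)
      have := k3 (by omega)
      exact Fin.ext (by omega)
    · have g4 := g3 (by omega)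
      obtain ⟨_, k2, _⟩ := hg (g x) i hi (by omega) (by omega)
      have := k2 (by omega)
      exact Fin.ext (by omega)
  exact ⟨hinv.toPerm, hinv, hg⟩

/-- block index of a vertex -/
def col (n k : ℕ) (P : ℕ → ℕ) (x : Fin (2 * n)) : Fin (k + 1) :=
  ⟨Nat.findGreatest (fun i => P i ≤ x.val) k, Nat.lt_succ_of_le (Nat.findGreatest_le k)⟩

lemma col_spec (h : IsP n k e P) (x : Fin (2 * n)) :
    P (col n k P x).val ≤ x.val ∧
      x.val < P (col n k P x).val + e (col n k P x).val + 2 := h.block x.2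

lemma col_eq (h : IsP n k e P) (x : Fin (2 * n)) (i : Fin (k + 1)) :
    col n k P x = i ↔ P i.val ≤ x.val ∧ x.val < P i.val + e i.val + 2 := by
  have := col_spec h x
  constructor
  · rintro rfl; exact this
  · rintro ⟨h1, h2⟩
    exact Fin.ext (h.uniq this.1 this.2 h1 h2)

def Sset (n k : ℕ) (e P : ℕ → ℕ) : Finset (Fin (2 * n)) :=
  univ.filter fun x => x.val < P (col n k P x).val + e (col n k P x).val

lemma cnt_Sset (h : IsP n k e P) (i : Fin (k + 1)) :
    cnt (col n k P) (Sset n k e P) i = e i.val := by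
  unfold cnt
  have hle := h.le (Nat.le_of_lt_succ i.2)
  rw [← Finset.card_map Fin.valEmbedding]
  have : ((Sset n k e P).filter (fun x => col n k P x = i)).map Fin.valEmbedding =
      Finset.Ico (P i.val) (P i.val + e i.val) := by
    ext y
    simp only [Sset, mem_map, mem_filter, mem_univ, true_and, Fin.valEmbedding_apply, mem_Ico]
    constructor
    · rintro ⟨x, ⟨h1, rfl⟩, rfl⟩
      exact ⟨(col_spec h x).1, h1⟩
    · rintro ⟨h1, h2⟩
      have hc : col n k P ⟨y, by omega⟩ = i := (col_eq h _ _).2 ⟨h1, by simp; omega⟩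
      exact ⟨⟨y, by omega⟩, ⟨by rw [hc]; exact h2, hc⟩, rfl⟩
  rw [this]; simp

open Classical in
noncomputable def Dset (n k : ℕ) (e P : ℕ → ℕ) : Finset (Equiv.Perm (Fin (2 * n))) :=
  univ.filter fun f => IsDiagram n f ∧ Crystallized n f ∧ Compat n k e P f

lemma Dset_eq (h : IsP n k e P) (σ : Equiv.Perm (Fin (2 * n)))
    (hσ : ∀ (x : Fin (2 * n)) (i : ℕ), i ≤ k → P i ≤ x.val → x.val < P i + e i + 2 →
      (x.val < P i + e i → σ x = x) ∧ (x.val = P i + e i → (σ x).val = x.val + 1) ∧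
      (x.val = P i + e i + 1 → (σ x).val + 1 = x.val)) :
    Dset n k e P = Aset (col n k P) (Sset n k e P) σ := by
  ext f
  simp only [Dset, Aset, mem_filter, mem_univ, true_and]
  constructor
  · rintro ⟨hd, hcr, hc⟩
    refine ⟨hd.1, ?_, ?_⟩
    · intro x hx heq
      simp only [Sset, mem_filter, mem_univ, true_and] at hx
      have h1 := (cryst_iff h hd hc).1 hcr x (col n k P x).val (Nat.le_of_lt_succ (Fin.is_lt _))
        (col_spec h x).1 hx
      exact h1 ((col_eq h _ _).1 heq)
    · intro x hx
      simp only [Sset, mem_filter, mem_univ, true_and, not_lt] at hx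
      obtain ⟨h1, h2⟩ := col_spec h x
      have hi := Nat.le_of_lt_succ (Fin.is_lt (col n k P x))
      have hlt := h.lt_k hi x.2 hx
      obtain ⟨_, s2, s3⟩ := hσ x _ hi h1 h2
      by_cases c2 : x.val = P (col n k P x).val + e (col n k P x).val
      · exact Fin.ext (by rw [s2 c2]; exact (hc x).2 ⟨_, hlt, c2⟩)
      · have c3 : x.val = P (col n k P x).val + e (col n k P x).val + 1 := by omega
        have := (compat_right h hd hc x).2 ⟨_, hlt, c3⟩
        have := s3 c3
        exact Fin.ext (by omega)
  · rintro ⟨h1, h2, h3⟩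
    have out : ∀ x : Fin (2 * n), P (col n k P x).val + e (col n k P x).val ≤ x.val → f x = σ x := by
      intro x hx
      apply h3
      simp [Sset]; omega
    have ins : ∀ x : Fin (2 * n), x.val < P (col n k P x).val + e (col n k P x).val →
        col n k P (f x) ≠ col n k P x := by
      intro x hx; apply h2; simp [Sset]; omega
    have hd : IsDiagram n f := by
      refine ⟨h1, fun x hx => ?_⟩
      obtain ⟨b1, b2⟩ := col_spec h x
      have hi := Nat.le_of_lt_succ (Fin.is_lt (col n k P x))
      obtain ⟨_, s2, s3⟩ := hσ x _ hi b1 b2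
      rcases lt_or_ge x.val (P (col n k P x).val + e (col n k P x).val) with hh | hh
      · exact ins x hh (by rw [hx])
      · rw [← out x hh, hx] at s2 s3
        omega
    have hc : Compat n k e P f := by
      intro x
      constructor
      · intro hx
        obtain ⟨b1, b2⟩ := col_spec h x
        have hi := Nat.le_of_lt_succ (Fin.is_lt (col n k P x))
        obtain ⟨_, s2, s3⟩ := hσ x _ hi b1 b2
        rcases lt_or_ge x.val (P (col n k P x).val + e (col n k P x).val) with hh | hh
        · exact absurd ((col_eq h (f x) (col n k P x)).2 ⟨by omega, by omega⟩) (ins x hh)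
        · rw [← out x hh] at s2 s3
          exact ⟨_, h.lt_k hi x.2 hh, by omega⟩
      · rintro ⟨i, hi, hx⟩
        have hcol : col n k P x = ⟨i, by omega⟩ := (col_eq h _ _).2 ⟨by simp; omega, by simp; omega⟩
        rw [out x (by rw [hcol]; simp; omega)]
        exact (hσ x i hi.le (by omega) (by omega)).2.1 hx
    refine ⟨hd, (cryst_iff h hd hc).2 ?_, hc⟩
    intro x i hi b1 b2 b3
    have hcol : col n k P x = ⟨i, by omega⟩ := (col_eq h _ _).2 ⟨b1, by simp; omega⟩
    have hcol' : col n k P (f x) = ⟨i, by omega⟩ := (col_eq h _ _).2 b3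
    exact ins x (by rw [hcol]; exact b2) (by rw [hcol, hcol'])

lemma card_Dset (h : IsP n k e P) (E : ℕ) (hE : ∑ i : Fin (k + 1), e i.val = 2 * E) :
    ((Dset n k e P).card : ℚ) =
      (∏ i : Fin (k + 1), ((e i.val).factorial : ℚ)) * U (k + 1) E (fun i => e i.val) := by
  obtain ⟨σ, hσ1, hσ2⟩ := exists_sigma h
  have hcnt : cnt (col n k P) (Sset n k e P) = fun i => e i.val := funext fun i => cnt_Sset h i
  rw [Dset_eq h σ hσ2, card_Aset (col n k P) E _ _ hσ1, hcnt]
  · intro x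
    obtain ⟨b1, b2⟩ := col_spec h x
    obtain ⟨s1, s2, s3⟩ := hσ2 x _ (Nat.le_of_lt_succ (Fin.is_lt (col n k P x))) b1 b2
    simp only [Sset, mem_filter, mem_univ, true_and, not_lt]
    constructor
    · intro hne; by_contra hlt; exact hne (s1 (by omega))
    · intro hle heq
      rw [heq] at s2 s3
      omega
  · rw [Finset.card_eq_sum_card_fiberwise (f := col n k P) (t := univ) (by simp), ← hE]
    exact Finset.sum_congr rfl fun i _ => cnt_Sset h i

end Struct
section Final

def exts {k : ℕ} (s : Fin (k + 1) → ℕ) (t : ℕ) : ℕ := if h : t < k + 1 then s ⟨t, h⟩ else 0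

def PP {k : ℕ} (s : Fin (k + 1) → ℕ) (i : ℕ) : ℕ := ∑ t ∈ range i, (exts s t + 2)

lemma exts_val {k : ℕ} (s : Fin (k + 1) → ℕ) (i : Fin (k + 1)) : exts s i.val = s i := by
  simp only [exts, i.2, dif_pos]

lemma isP_PP {n k : ℕ} (s : Fin (k + 1) → ℕ) (hk : k ≤ n) (hs : ∑ i, s i = 2 * (n - k)) :
    IsP n k (exts s) (PP s) := by
  refine ⟨by simp [PP], fun i => ?_, ?_⟩
  · simp only [PP]; rw [Finset.sum_range_succ]; ring
  · simp only [PP]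
    rw [Finset.sum_add_distrib, Finset.sum_range]
    simp only [exts_val, hs, sum_const, card_range, smul_eq_mul]
    omega

lemma exists_comp {n k : ℕ} (f : Equiv.Perm (Fin (2 * n))) (hd : IsDiagram n f)
    (hf : shortChords n f = k) :
    ∃ s : Fin (k + 1) → ℕ, k ≤ n ∧ ∑ i, s i = 2 * (n - k) ∧ Compat n k (exts s) (PP s) f := by
  have hL : (Lset n f).card = k := by rw [card_Lset, hf]
  have hmem : ∀ y, y ∈ Lset n f ↔ ∃ x : Fin (2 * n), (f x).val = x.val + 1 ∧ x.val = y := by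
    intro y; simp [Lset]
  let l := (Lset n f).orderEmbOfFin hL
  let g : ℕ → ℕ := fun i => if h : i < k then l ⟨i, h⟩ else 2 * n
  let Q : ℕ → ℕ := fun i => match i with
    | 0 => 0
    | i + 1 => g i + 2
  have hgmem : ∀ i, i < k → g i ∈ Lset n f := by
    intro i hi
    simp only [g, hi, dif_pos]
    exact Finset.orderEmbOfFin_mem _ _ _
  have hQ : ∀ i, i ≤ k → Q i ≤ g i := by
    intro i hi
    rcases i with _ | i
    · exact Nat.zero_le _
    · change g i + 2 ≤ g (i + 1)
      obtain ⟨x, hx, hxi⟩ := (hmem _).1 (hgmem i (by omega))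
      rcases hi.lt_or_eq with hlt | heq
      · obtain ⟨y, hy, hyi⟩ := (hmem _).1 (hgmem (i + 1) hlt)
        have hlt' : g i < g (i + 1) := by
          have h1 : i < k := by omega
          simp only [g, h1, hlt, dif_pos]
          exact l.strictMono (by simp)
        by_contra hcon
        have h1 : f x = y := Fin.ext (by omega)
        have h2 : f y = x := by rw [← h1, hd.1]
        rw [h2] at hy
        omega
      · have h1 : g (i + 1) = 2 * n := by simp [g, heq]
        have := (f x).2
        omega
  let s : Fin (k + 1) → ℕ := fun i => g i.val - Q i.val
  have hs : ∀ i, i ≤ k → exts s i = g i - Q i := by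
    intro i hi
    simp only [exts, s]
    rw [dif_pos (by omega)]
  have hP : ∀ i, i ≤ k + 1 → PP s i = Q i := by
    intro i
    induction i with
    | zero => intro _; simp [PP, Q]
    | succ i ih =>
      intro hi
      have h1 := ih (by omega)
      have h2 := hs i (by omega)
      have h3 := hQ i (by omega)
      have h4 : PP s (i + 1) = PP s i + (exts s i + 2) := by
        simp only [PP]; rw [Finset.sum_range_succ]
      have h5 : Q (i + 1) = g i + 2 := rfl
      omega
  have hk1 : PP s (k + 1) = 2 * n + 2 := by
    rw [hP _ le_rfl]
    change g k + 2 = _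
    simp [g]
  have hsum : ∑ i, s i + 2 * k = 2 * n := by
    simp only [PP] at hk1
    rw [Finset.sum_add_distrib, Finset.sum_range] at hk1
    simp only [exts_val, sum_const, card_range, smul_eq_mul] at hk1
    omega
  have hkn : k ≤ n := by omega
  refine ⟨s, hkn, by omega, ?_⟩
  rw [compat_iff (isP_PP s hkn (by omega))]
  have hPg : ∀ i, i < k → PP s i + exts s i = g i := by
    intro i hi
    have := hP i (by omega)
    have := hs i (by omega)
    have := hQ i (by omega)
    omega
  ext y
  rw [mem_image]
  constructor
  · intro hy
    have : y ∈ Set.range l := by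
      rw [Finset.range_orderEmbOfFin]; exact hy
    obtain ⟨i, rfl⟩ := this
    refine ⟨i.val, mem_range.2 i.2, ?_⟩
    rw [hPg _ i.2]
    simp [g]
  · rintro ⟨i, hi, rfl⟩
    rw [hPg i (mem_range.1 hi)]
    exact hgmem i (mem_range.1 hi)

noncomputable def Xset (n k q : ℕ) :
    Finset (Σ _ : Fin (k + 1) × (Fin (k + 1) → ℕ), Equiv.Perm (Fin (2 * n))) :=
  (((univ : Finset (Fin (k + 1))) ×ˢ
    (piAntidiag univ (2 * (n - k)) : Finset (Fin (k + 1) → ℕ))).filter (fun x => x.2 x.1 = q)).sigma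
    (fun x => Dset n k (exts x.2) (PP x.2))

lemma mem_Xset {n k q : ℕ} (j : Fin (k + 1)) (s : Fin (k + 1) → ℕ) (f : Equiv.Perm (Fin (2 * n))) :
    (⟨(j, s), f⟩ : Σ _ : Fin (k + 1) × (Fin (k + 1) → ℕ), Equiv.Perm (Fin (2 * n))) ∈ Xset n k q ↔
      (∑ i, s i = 2 * (n - k) ∧ s j = q) ∧
        IsDiagram n f ∧ Crystallized n f ∧ Compat n k (exts s) (PP s) f := by
  simp [Xset, Dset]

lemma X_inj {n k q : ℕ} (hk : k ≤ n) (x y) (hx : x ∈ Xset n k q) (hy : y ∈ Xset n k q)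
    (h1 : x.2 = y.2) (h2 : PP x.1.2 x.1.1.val = PP y.1.2 y.1.1.val) : x = y := by
  obtain ⟨⟨j, s⟩, f⟩ := x
  obtain ⟨⟨j', s'⟩, f'⟩ := y
  dsimp only at h1 h2
  subst h1
  rw [mem_Xset] at hx hy
  have hp := isP_PP s hk hx.1.1
  have hp' := isP_PP s' hk hy.1.1
  have hu := compat_uniq hp hp' hx.2.2.2 hy.2.2.2
  have hss : s = s' := by
    funext i
    have := (hu i.val (Nat.le_of_lt_succ i.2)).2
    rwa [exts_val, exts_val] at this
  subst hss
  have hj : j = j' := by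
    apply Fin.ext
    exact hp.uniq (x := PP s j.val) le_rfl (by omega) (by omega) (by omega)
  rw [hj]

lemma C_eq_card {n k q : ℕ} (hk : k ≤ n) : C n k q = (Xset n k q).card := by
  classical
  unfold C
  split_ifs with hq
  · subst hq
    rw [Nat.subtype_card ((Xset n k 0).image (fun x => (x.2, PP x.1.2 x.1.1.val)))]
    · rw [Finset.card_image_of_injOn]
      intro x hx y hy hxy
      simp only [Prod.mk.injEq] at hxy
      exact X_inj hk x y hx hy hxy.1 hxy.2
    · rintro ⟨f, a⟩
      rw [mem_image]
      constructor
      · rintro ⟨⟨⟨j, s⟩, f'⟩, hx, heq⟩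
        simp only [Prod.mk.injEq] at heq
        obtain ⟨rfl, rfl⟩ := heq
        obtain ⟨⟨h1, h2⟩, hd, hcr, hc⟩ := (mem_Xset _ _ _).1 hx
        have hp := isP_PP s hk h1
        refine ⟨hd, hcr, compat_short hp hc, (gap_iff hp hd hc _).2
          ⟨j.val, Nat.le_of_lt_succ j.2, rfl, by rw [exts_val, h2]⟩⟩
      · rintro ⟨hd, hcr, hsh, hg⟩
        dsimp only at hd hcr hsh hg
        obtain ⟨s, _, h1, hc⟩ := exists_comp f hd hsh
        have hp := isP_PP s hk h1
        obtain ⟨i, hi, rfl, he⟩ := (gap_iff hp hd hc _).1 hg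
        refine ⟨⟨(⟨i, by omega⟩, s), f⟩, (mem_Xset _ _ _).2 ⟨⟨h1, ?_⟩, hd, hcr, hc⟩, rfl⟩
        exact (exts_val s ⟨i, by omega⟩).symm.trans he
  · rw [Nat.subtype_card ((Xset n k q).image
      (fun x => (x.2, PP x.1.2 x.1.1.val, PP x.1.2 x.1.1.val + q - 1)))]
    · rw [Finset.card_image_of_injOn]
      intro x hx y hy hxy
      simp only [Prod.mk.injEq] at hxy
      exact X_inj hk x y hx hy hxy.1 hxy.2.1
    · rintro ⟨f, a, b⟩
      rw [mem_image]
      constructor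
      · rintro ⟨⟨⟨j, s⟩, f'⟩, hx, heq⟩
        simp only [Prod.mk.injEq] at heq
        obtain ⟨rfl, rfl, rfl⟩ := heq
        obtain ⟨⟨h1, h2⟩, hd, hcr, hc⟩ := (mem_Xset _ _ _).1 hx
        have hp := isP_PP s hk h1
        refine ⟨hd, hcr, compat_short hp hc, (bubble_iff hp hd hc _ _).2
          ⟨j.val, Nat.le_of_lt_succ j.2, rfl, by rw [exts_val, h2]; dsimp only; omega,
            by rw [exts_val, h2]; omega⟩, ?_⟩
        simp only [bubbleSize]; omega
      · rintro ⟨hd, hcr, hsh, hg, hbs⟩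
        dsimp only [bubbleSize] at hd hcr hsh hg hbs
        obtain ⟨s, _, h1, hc⟩ := exists_comp f hd hsh
        have hp := isP_PP s hk h1
        obtain ⟨i, hi, rfl, he, h0⟩ := (bubble_iff hp hd hc _ _).1 hg
        refine ⟨⟨(⟨i, by omega⟩, s), f⟩, (mem_Xset _ _ _).2 ⟨⟨h1, ?_⟩, hd, hcr, hc⟩, ?_⟩
        · refine (exts_val s ⟨i, by omega⟩).symm.trans ?_; change exts s i = q; omega
        · simp only [Prod.mk.injEq, true_and]; omega

end Final

/-- The number `C n k q` of bubbles of size `q` amongst all crystallized diagrams with `n` chords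
and `k` short chords equals
`(k+1) · (2n-k-q-1)!/(2n-k-2q-1)! · Σ (∏ⱼ wⱼ!)/(∏ᵢ pᵢ!)`,
the sum running over assignments `p` of nonnegative integers to the edges of `K_k` with total
sum `n - k - q`, and `w = B p` with `B` the incidence matrix of `K_k`. -/
theorem C_eq_sum_multinomial (n k q : ℕ) (hn : 1 ≤ n) (hk : 1 ≤ k)
    (hkq : k + q ≤ n) (hkq2 : k + 2 * q + 1 ≤ 2 * n) :
    (C n k q : ℚ) =
      (k + 1 : ℚ) * (Nat.factorial (2 * n - k - q - 1) : ℚ) /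
        (Nat.factorial (2 * n - k - 2 * q - 1) : ℚ) *
      ∑ p ∈ (Fintype.piFinset fun _ : Edge k => Finset.range (n - k - q + 1)).filter
          (fun p => ∑ e, p e = n - k - q),
        (∏ j : Fin k, (Nat.factorial (wvec p j) : ℚ)) /
        (∏ e : Edge k, (Nat.factorial (p e) : ℚ)) := by
  have hk' : k ≤ n := by omega
  obtain ⟨M, hM⟩ : ∃ M, n - k = M + q := ⟨n - k - q, by omega⟩
  have hM' : n - k - q = M := by omega
  have hC : (C n k q : ℚ) = ∑ j : Fin (k + 1),
      ∑ s ∈ (piAntidiag univ (2 * (M + q)) : Finset (Fin (k + 1) → ℕ)) with s j = q,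
      (∏ i, ((s i).factorial : ℚ)) * U (k + 1) (M + q) s := by
    rw [C_eq_card hk', Xset, Finset.card_sigma, Nat.cast_sum, Finset.sum_filter,
      Finset.sum_product]
    refine Finset.sum_congr rfl fun j _ => ?_
    rw [← Finset.sum_filter, hM]
    refine Finset.sum_congr rfl fun s hs => ?_
    have hs1 : ∑ i, s i = 2 * (M + q) := by
      have := (mem_filter.1 hs).1
      simpa using this
    have hp := isP_PP s hk' (by rw [hs1, hM])
    have := card_Dset hp (M + q) (by simp only [exts_val]; exact hs1)
    simp only [exts_val] at this
    exact this
  have hset : (Fintype.piFinset fun _ : Edge k => Finset.range (n - k - q + 1)).filter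
      (fun p => ∑ e, p e = n - k - q) = piAntidiag univ M := by
    rw [hM']
    ext p
    simp only [mem_filter, Fintype.mem_piFinset, mem_range, mem_piAntidiag, mem_univ,
      implies_true, and_true]
    constructor
    · exact fun h => h.2
    · intro h
      refine ⟨fun e => ?_, h⟩
      have := Finset.single_le_sum (f := p) (fun i _ => Nat.zero_le _) (Finset.mem_univ e)
      have h' : ∑ e, p e = M := h
      omega
  rw [hset, hC, Finset.sum_congr rfl fun j _ => sum_comp j q M hk, Finset.sum_const]
  have e1 : 2 * n - k - q - 1 = (2 * M + k - 1) + q := by omega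
  have e2 : 2 * n - k - 2 * q - 1 = 2 * M + k - 1 := by omega
  rw [e1, e2, ← Nat.add_choose_mul_factorial_mul_factorial]
  have hf : ((2 * M + k - 1).factorial : ℚ) ≠ 0 := by positivity
  generalize ∑ p ∈ (piAntidiag univ M : Finset (Edge k → ℕ)), (_ : ℚ) = Z
  rw [Finset.card_univ, Fintype.card_fin, nsmul_eq_mul, Nat.cast_mul, Nat.cast_mul,
    Nat.cast_add, Nat.cast_one]
  field_simp

end ChordBubbles
end

section
/- For every integer k ≥ 1, with M = (k−2)·I_E − L over ℚ and j_E the all-ones E×1 vector, one has (j_Eᵀ·M⁻¹·j_E) · det M = (k+1)·k^{k(k−1)/2} / 2. -/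
open Matrix Polynomial

namespace ChordBubbles

/-- The incidence matrix of the complete graph `K_{k+1}` over `ℚ`: rows indexed by vertices,
columns by edges, with entry 1 exactly when the vertex is an endpoint of the edge. -/
def Bmat (k : ℕ) : Matrix (Fin (k + 1)) (Edge (k + 1)) ℚ :=
  Matrix.of fun v e => if v ∈ e.val then 1 else 0

/-- The adjacency matrix of the line graph of `K_{k+1}`: `L = Bᵀ·B - 2·I`. -/
def Lmat (k : ℕ) : Matrix (Edge (k + 1)) (Edge (k + 1)) ℚ :=
  (Bmat k)ᵀ * Bmat k - 2 • 1

/-- The matrix `M = (k-2)·I - L`. -/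
noncomputable def Mmat (k : ℕ) : Matrix (Edge (k + 1)) (Edge (k + 1)) ℚ :=
  ((k : ℚ) - 2) • 1 - Lmat k

lemma B_eq (k : ℕ) (v : Fin (k+1)) (e : Edge (k+1)) :
    Bmat k v e = (⊤ : SimpleGraph (Fin (k+1))).incMatrix ℚ v e.1 := by
  classical
  obtain ⟨e, he⟩ := e
  simp only [Bmat, SimpleGraph.incMatrix_apply, Set.indicator_apply,
    SimpleGraph.incidenceSet]
  simp [he]
  rfl

lemma sum_edge (k : ℕ) (f : Sym2 (Fin (k+1)) → ℚ) (hf : ∀ e, e.IsDiag → f e = 0) :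
    ∑ e : Edge (k+1), f e.1 = ∑ e, f e := by
  classical
  have h1 : ∑ e ∈ Finset.univ.filter (fun e : Sym2 (Fin (k+1)) => ¬ e.IsDiag), f e = ∑ e, f e := by
    apply Finset.sum_filter_of_ne
    intro e _ h1 h2
    exact h1 (hf e h2)
  rw [← h1]
  exact (Finset.sum_subtype (p := fun e : Sym2 (Fin (k+1)) => ¬ e.IsDiag) _ (by simp) f).symm

lemma inc_diag (k : ℕ) (v : Fin (k+1)) (e : Sym2 (Fin (k+1))) (he : e.IsDiag) :
    (⊤ : SimpleGraph (Fin (k+1))).incMatrix ℚ v e = 0 := by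
  classical
  simp only [SimpleGraph.incMatrix_apply, Set.indicator_apply, SimpleGraph.incidenceSet]
  simp [he]

lemma row_sum (k : ℕ) (v : Fin (k+1)) : ∑ e, Bmat k v e = k := by
  classical
  simp only [B_eq]
  rw [sum_edge k (fun e => (⊤ : SimpleGraph (Fin (k+1))).incMatrix ℚ v e) (fun e => inc_diag k v e),
    SimpleGraph.sum_incMatrix_apply]
  simp

lemma col_sum (k : ℕ) (e : Edge (k+1)) : ∑ v, Bmat k v e = 2 := by
  classical
  simp only [B_eq]
  apply SimpleGraph.sum_incMatrix_apply_of_mem_edgeSet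
  have := e.2
  simpa using this

lemma BBt (k : ℕ) (v w : Fin (k+1)) :
    (Bmat k * (Bmat k)ᵀ) v w = if v = w then (k:ℚ) else 1 := by
  classical
  have h := congrFun (congrFun
    (SimpleGraph.incMatrix_mul_transpose (R := ℚ) (G := (⊤ : SimpleGraph (Fin (k+1))))) v) w
  rw [Matrix.mul_apply] at h ⊢
  simp only [Matrix.transpose_apply, B_eq] at h ⊢
  rw [sum_edge k (fun e => (⊤ : SimpleGraph (Fin (k+1))).incMatrix ℚ v e *
    (⊤ : SimpleGraph (Fin (k+1))).incMatrix ℚ w e) (fun e he => by simp [inc_diag k v e he]), h]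
  by_cases hvw : v = w <;> simp [hvw]

lemma card_edge (k : ℕ) : Fintype.card (Edge (k+1)) = (k+1) + k * (k-1)/2 - 1 := by
  have h : Fintype.card (Edge (k+1)) = (Fintype.card (Fin (k+1))).choose 2 :=
    Sym2.card_subtype_not_diag
  rw [h, Fintype.card_fin, Nat.choose_succ_succ' k 1, Nat.choose_one_right, Nat.choose_two_right]
  omega

lemma M_eq (k : ℕ) : Mmat k = (k:ℚ) • (1 : Matrix _ _ ℚ) - (Bmat k)ᵀ * Bmat k := by
  rw [Mmat, Lmat, sub_smul]
  have : (2:ℚ) • (1 : Matrix (Edge (k+1)) (Edge (k+1)) ℚ) = 2 • 1 := by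
    rw [two_smul, two_smul]
  rw [this]; abel

lemma det_small (k : ℕ) :
    ((k:ℚ) • (1 : Matrix _ _ ℚ) - Bmat k * (Bmat k)ᵀ).det = -(k:ℚ) := by
  have : (k:ℚ) • (1 : Matrix _ _ ℚ) - Bmat k * (Bmat k)ᵀ =
      1 - replicateCol Unit (fun _ => (1:ℚ)) * replicateRow Unit (fun _ => (1:ℚ)) := by
    ext v w
    rw [Matrix.sub_apply, BBt]
    by_cases h : v = w <;> simp [h, Matrix.mul_apply]
  rw [this, Matrix.det_one_sub_mul_comm]
  simp [Matrix.det_unique, Matrix.mul_apply]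

lemma det_M (k : ℕ) (hk : 1 ≤ k) : (Mmat k).det = -(k:ℚ) ^ (k * (k-1)/2) := by
  have hk0 : (k:ℚ) ≠ 0 := by positivity
  have h1 : Mmat k = (k:ℚ) • (1 - (Bmat k)ᵀ * ((k:ℚ)⁻¹ • Bmat k)) := by
    rw [M_eq, smul_sub, Matrix.mul_smul, smul_smul, mul_inv_cancel₀ hk0, one_smul]
  have h2 : (k:ℚ) • (1 : Matrix _ _ ℚ) - Bmat k * (Bmat k)ᵀ =
      (k:ℚ) • (1 - ((k:ℚ)⁻¹ • Bmat k) * (Bmat k)ᵀ) := by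
    rw [smul_sub, Matrix.smul_mul, smul_smul, mul_inv_cancel₀ hk0, one_smul]
  have h3 := det_small k
  rw [h2, Matrix.det_smul, Fintype.card_fin] at h3
  rw [h1, Matrix.det_smul, Matrix.det_one_sub_mul_comm, card_edge]
  have h4 : k + 1 + k * (k-1)/2 - 1 = k + k * (k-1)/2 := by omega
  rw [h4]
  apply mul_left_cancel₀ hk0
  calc _ = (k:ℚ) ^ (k * (k-1)/2) * ((k:ℚ)^(k+1) *
        (1 - ((k:ℚ)⁻¹ • Bmat k) * (Bmat k)ᵀ).det) := by ring
    _ = _ := by rw [h3]; ring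

lemma M_one (k : ℕ) : Mmat k *ᵥ (fun _ => (1:ℚ)) = fun _ => -(k:ℚ) := by
  have hB : Bmat k *ᵥ (fun _ => (1:ℚ)) = fun _ => (k:ℚ) := by
    ext v; simp [Matrix.mulVec, dotProduct, row_sum]
  rw [M_eq, Matrix.sub_mulVec, ← Matrix.mulVec_mulVec, hB]
  ext e
  simp only [Pi.sub_apply, Matrix.smul_mulVec, Matrix.one_mulVec, Matrix.mulVec, dotProduct,
    Matrix.transpose_apply, ← Finset.sum_mul, col_sum, Pi.smul_apply, smul_eq_mul]
  ring

/-- With `M = (k-2)·I - L` and `j_E` the all-ones vector, one has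
`(j_Eᵀ·M⁻¹·j_E) · det M = (k+1)·k^{k(k-1)/2} / 2`. -/
theorem grand_sum_inverse_mul_det_M (k : ℕ) (hk : 1 ≤ k) :
    (∑ i, ∑ j, (Mmat k)⁻¹ i j) * (Mmat k).det =
      ((k : ℚ) + 1) * (k : ℚ) ^ (k * (k - 1) / 2) / 2 := by
  have hk0 : (k:ℚ) ≠ 0 := by positivity
  have hdet := det_M k hk
  have hu : IsUnit (Mmat k).det := by
    rw [hdet, isUnit_iff_ne_zero]
    exact neg_ne_zero.mpr (pow_ne_zero _ hk0)
  have h1 : ∀ i, ∑ j, (Mmat k)⁻¹ i j = -(k:ℚ)⁻¹ := by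
    intro i
    have h := congrArg (fun v => ((Mmat k)⁻¹ *ᵥ v) i) (M_one k)
    simp only [Matrix.mulVec_mulVec, Matrix.nonsing_inv_mul _ hu, Matrix.one_mulVec] at h
    simp only [Matrix.mulVec, dotProduct, ← Finset.sum_mul] at h
    field_simp
    linarith
  have hc : (Fintype.card (Edge (k+1)) : ℚ) = (k+1) * k / 2 := by
    have h : Fintype.card (Edge (k+1)) = (Fintype.card (Fin (k+1))).choose 2 :=
      Sym2.card_subtype_not_diag
    rw [h, Fintype.card_fin, Nat.cast_choose_two]
    push_cast; ring
  simp only [h1, Finset.sum_const, Finset.card_univ, nsmul_eq_mul, hc, hdet]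
  field_simp

end ChordBubbles
end
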